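/- For all integers d ≥ 2 and n ≥ 1 there exists an ortholattice term t(z̄, x₁,…,x_n) such that for every directly irreducible modular ortholattice M of dimension d: (i) t(b̄, c̄) = 1 for every substitution (b̄, c̄) all of whose entries lie in a subset T of M with |T| < n; and (ii) if M is infinite, then there exists a substitution (b̄, c̄) in M with t(b̄, c̄) ≠ 1. Consequently, no infinite directly irreducible modular ortholattice of finite dimension d ≥ 2 admits a finite universal test set. -/

import Mathlib

universe u

/-- An ortholattice: a bounded lattice with an order-reversing involution `x ↦ x′`
satisfying `x ⊓ x′ = ⊥` and `x ⊔ x′ = ⊤`. -/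
class Ortholattice (α : Type*) extends Lattice α, BoundedOrder α where
  compl : α → α
  compl_antitone : ∀ x y : α, x ≤ y → compl y ≤ compl x
  compl_compl : ∀ x : α, compl (compl x) = x
  inf_compl : ∀ x : α, x ⊓ compl x = ⊥
  sup_compl : ∀ x : α, x ⊔ compl x = ⊤

postfix:max "′" => Ortholattice.compl

/-- The direct product of two ortholattices. -/
instance Ortholattice.prod (α β : Type*) [Ortholattice α] [Ortholattice β] :
    Ortholattice (α × β) where
  compl p := (p.1′, p.2′)
  compl_antitone x y h := ⟨compl_antitone _ _ h.1, compl_antitone _ _ h.2⟩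
  compl_compl x := by cases x; simp [compl_compl]
  inf_compl x := by cases x; rw [Prod.mk_inf_mk]; simp [inf_compl]; rfl
  sup_compl x := by cases x; rw [Prod.mk_sup_mk]; simp [sup_compl]; rfl

/-- An isomorphism of ortholattices: an order isomorphism commuting with
orthocomplementation. -/
structure OLIso (α β : Type*) [Ortholattice α] [Ortholattice β] extends α ≃ β where
  map_rel : ∀ x y : α, x ≤ y ↔ toFun x ≤ toFun y
  map_compl : ∀ x : α, toFun x′ = (toFun x)′

/-- An ortholattice is directly irreducible if it is nontrivial and not isomorphic to a
direct product of two nontrivial ortholattices. -/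
def DirectlyIrreducible (α : Type u) [Ortholattice α] : Prop :=
  Nontrivial α ∧ ∀ (β γ : Type u) [Ortholattice β] [Ortholattice γ],
    Nontrivial β → Nontrivial γ → IsEmpty (OLIso α (β × γ))

/-- A lattice has finite dimension `d` if some maximal chain has exactly `d + 1` elements. -/
def HasDim (α : Type*) [Lattice α] (d : ℕ) : Prop :=
  ∃ s : Set α, IsMaxChain (· ≤ ·) s ∧ s.ncard = d + 1

/-- Ortholattice terms in the operations ∧, ∨, ', 0, 1 with variables indexed by ℕ. -/
inductive OLTerm : Type
  | var : ℕ → OLTerm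
  | zero : OLTerm
  | one : OLTerm
  | inf : OLTerm → OLTerm → OLTerm
  | sup : OLTerm → OLTerm → OLTerm
  | compl : OLTerm → OLTerm

/-- Evaluation of an ortholattice term under a substitution `v`. -/
def OLTerm.eval {α : Type*} [Ortholattice α] (v : ℕ → α) : OLTerm → α
  | var i => v i
  | zero => ⊥
  | one => ⊤
  | inf t s => t.eval v ⊓ s.eval v
  | sup t s => t.eval v ⊔ s.eval v
  | compl t => (t.eval v)′

/-- A term is a tautology of an ortholattice if it evaluates to ⊤ under every substitution. -/
def IsTautology (α : Type*) [Ortholattice α] (t : OLTerm) : Prop :=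
  ∀ v : ℕ → α, t.eval v = ⊤

/-- A universal test set: every term evaluating to ⊤ under all substitutions from `T`
is a tautology. -/
def IsUniversalTestSet (α : Type*) [Ortholattice α] (T : Set α) : Prop :=
  ∀ t : OLTerm, (∀ v : ℕ → α, (∀ i, v i ∈ T) → t.eval v = ⊤) → IsTautology α t


namespace OLAux

open Ortholattice

section basic
variable {M : Type u} [Ortholattice M]

theorem le_iff_compl {x y : M} : x′ ≤ y ↔ y′ ≤ x := by
  constructor
  · intro h
    have := compl_antitone _ _ h
    rwa [Ortholattice.compl_compl] at this
  · intro h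
    have := compl_antitone _ _ h
    rwa [Ortholattice.compl_compl] at this

theorem compl_sup (x y : M) : (x ⊔ y)′ = x′ ⊓ y′ := by
  apply le_antisymm
  · exact le_inf (compl_antitone _ _ le_sup_left) (compl_antitone _ _ le_sup_right)
  · have h1 : x ≤ (x′ ⊓ y′)′ := by
      have := compl_antitone (x′ ⊓ y′) x′ inf_le_left
      rwa [Ortholattice.compl_compl] at this
    have h2 : y ≤ (x′ ⊓ y′)′ := by
      have := compl_antitone (x′ ⊓ y′) y′ inf_le_right
      rwa [Ortholattice.compl_compl] at this
    have := compl_antitone _ _ (sup_le h1 h2)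
    rwa [Ortholattice.compl_compl] at this

theorem compl_inf (x y : M) : (x ⊓ y)′ = x′ ⊔ y′ := by
  have := compl_sup (x′) (y′)
  rw [Ortholattice.compl_compl, Ortholattice.compl_compl] at this
  rw [← this, Ortholattice.compl_compl]

theorem compl_inf_self (x : M) : x′ ⊓ x = ⊥ := by
  rw [inf_comm, inf_compl]

theorem compl_bot : (⊥ : M)′ = ⊤ := by
  have := sup_compl (⊥ : M)
  simpa using this

theorem compl_top : (⊤ : M)′ = ⊥ := by
  have := inf_compl (⊤ : M)
  simpa using this

variable [IsModularLattice M]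

/-- The interval below `c` as an ortholattice. -/
def iicOL (c : M) : Ortholattice (Set.Iic c) where
  compl y := ⟨(y : M)′ ⊓ c, inf_le_right⟩
  compl_antitone x y h := by
    have h' : (x : M) ≤ y := h
    exact Subtype.mk_le_mk.2 (inf_le_inf_right _ (compl_antitone _ _ h'))
  compl_compl y := by
    obtain ⟨y, hy⟩ := y
    apply Subtype.ext
    change (y′ ⊓ c)′ ⊓ c = y
    rw [compl_inf, Ortholattice.compl_compl, sup_inf_assoc_of_le _ hy, compl_inf_self, sup_bot_eq]
  inf_compl y := by
    obtain ⟨y, hy⟩ := y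
    apply Subtype.ext
    change y ⊓ (y′ ⊓ c) = ⊥
    rw [← inf_assoc, inf_compl, bot_inf_eq]
  sup_compl y := by
    obtain ⟨y, hy⟩ := y
    apply Subtype.ext
    change y ⊔ (y′ ⊓ c) = c
    rw [← sup_inf_assoc_of_le _ hy, sup_compl, top_inf_eq]

theorem sasaki_compl {c : M} (hc : ∀ y, y ≤ (c ⊓ y) ⊔ (c′ ⊓ y)) (x : M) :
    (x ⊓ c)′ ⊓ c = x′ ⊓ c := by
  apply le_antisymm
  · rw [compl_inf]
    have h1 : x′ ⊔ c′ ≤ (c ⊓ x′) ⊔ c′ :=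
      sup_le ((hc _).trans (sup_le_sup_left inf_le_left _)) le_sup_right
    calc (x′ ⊔ c′) ⊓ c ≤ ((c ⊓ x′) ⊔ c′) ⊓ c := inf_le_inf_right _ h1
      _ = (c ⊓ x′) ⊔ (c′ ⊓ c) := sup_inf_assoc_of_le _ inf_le_left
      _ = x′ ⊓ c := by rw [compl_inf_self, sup_bot_eq, inf_comm]
  · exact inf_le_inf_right _ (compl_antitone _ _ inf_le_left)

theorem central_trivial (hM : DirectlyIrreducible M) {c : M}
    (hc : ∀ y, y ≤ (c ⊓ y) ⊔ (c′ ⊓ y)) : c = ⊥ ∨ c = ⊤ := by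
  by_contra hcon
  push Not at hcon
  obtain ⟨h0, h1⟩ := hcon
  have h1' : c′ ≠ ⊥ := by
    intro h
    apply h1
    rw [← Ortholattice.compl_compl c, h, compl_bot]
  have hc' : ∀ y, y ≤ (c′ ⊓ y) ⊔ ((c′)′ ⊓ y) := by
    intro y
    rw [Ortholattice.compl_compl, sup_comm]
    exact hc y
  letI i1 : Ortholattice (Set.Iic c) := iicOL c
  letI i2 : Ortholattice (Set.Iic (c′)) := iicOL (c′)
  have n1 : Nontrivial (Set.Iic c) :=
    ⟨⟨⟨⊥, bot_le⟩, ⟨c, le_rfl⟩, fun h => h0 (congrArg Subtype.val h).symm⟩⟩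
  have n2 : Nontrivial (Set.Iic (c′)) :=
    ⟨⟨⟨⊥, bot_le⟩, ⟨c′, le_rfl⟩, fun h => h1' (congrArg Subtype.val h).symm⟩⟩
  have key := hM.2 (Set.Iic c) (Set.Iic (c′)) n1 n2
  refine key.false (@OLIso.mk M (Set.Iic c × Set.Iic (c′)) _ (Ortholattice.prod _ _)
    { toFun := fun x => (⟨x ⊓ c, inf_le_right⟩, ⟨x ⊓ c′, inf_le_right⟩)
      invFun := fun p => (p.1 : M) ⊔ (p.2 : M)
      left_inv := ?_
      right_inv := ?_ } ?_ ?_)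
  · intro x
    apply le_antisymm
    · exact sup_le inf_le_left inf_le_left
    · have := hc x
      rwa [inf_comm c, inf_comm (c′)] at this
  · rintro ⟨⟨a, ha⟩, ⟨b, hb⟩⟩
    have ha' : a ≤ c := ha
    have hb' : b ≤ c′ := hb
    apply Prod.ext
    · apply Subtype.ext
      change (a ⊔ b) ⊓ c = a
      have : b ⊓ c = ⊥ := le_bot_iff.1 ((inf_le_inf_right c hb').trans (compl_inf_self c).le)
      rw [sup_inf_assoc_of_le _ ha', this, sup_bot_eq]
    · apply Subtype.ext
      change (a ⊔ b) ⊓ c′ = b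
      have : a ⊓ c′ = ⊥ := le_bot_iff.1 ((inf_le_inf_right (c′) ha').trans (inf_compl c).le)
      rw [sup_comm, sup_inf_assoc_of_le _ hb', this, sup_bot_eq]
  · intro x y
    constructor
    · intro h
      exact ⟨inf_le_inf_right c h, inf_le_inf_right (c′) h⟩
    · rintro ⟨h, h'⟩
      have e1 : x ⊓ c ≤ y ⊓ c := h
      have e2 : x ⊓ c′ ≤ y ⊓ c′ := h'
      refine (hc x).trans (sup_le ?_ ?_)
      · rw [inf_comm]; exact e1.trans inf_le_left
      · rw [inf_comm]; exact e2.trans inf_le_left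
  · intro x
    apply Prod.ext
    · apply Subtype.ext
      change x′ ⊓ c = (x ⊓ c)′ ⊓ c
      exact (sasaki_compl hc x).symm
    · apply Subtype.ext
      change (x′) ⊓ (c′) = ((x ⊓ (c′))′ ⊓ (c′))
      exact (sasaki_compl hc' x).symm

theorem exists_step (hM : DirectlyIrreducible M) {c : M} (h0 : c ≠ ⊥) (h1 : c ≠ ⊤) :
    ∃ z : M, ¬ (c ⊔ z) ⊓ z′ ≤ c := by
  by_contra hcon
  push Not at hcon
  have hc : ∀ y, y ≤ (c ⊓ y) ⊔ (c′ ⊓ y) := by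
    intro y
    have h := hcon (y′)
    rw [Ortholattice.compl_compl] at h
    have h2 : (c ⊔ y′) ⊓ y ≤ c ⊓ y := le_inf h inf_le_right
    have h3 : (c ⊓ y)′ ≤ (c′ ⊓ y) ⊔ y′ := by
      have := compl_antitone _ _ h2
      rwa [compl_inf (c ⊔ y′), compl_sup, Ortholattice.compl_compl] at this
    have h4 : y ≤ (c ⊓ y) ⊔ ((c ⊓ y)′ ⊓ y) := by
      rw [← sup_inf_assoc_of_le _ (inf_le_right : c ⊓ y ≤ y), sup_compl, top_inf_eq]
    refine h4.trans (sup_le_sup_left ?_ _)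
    calc (c ⊓ y)′ ⊓ y ≤ ((c′ ⊓ y) ⊔ y′) ⊓ y := inf_le_inf_right _ h3
      _ = (c′ ⊓ y) ⊔ (y′ ⊓ y) := sup_inf_assoc_of_le _ inf_le_right
      _ = c′ ⊓ y := by rw [compl_inf_self, sup_bot_eq]
  rcases central_trivial hM hc with h | h
  · exact h0 h
  · exact h1 h

end basic

theorem exists_rank {M : Type u} [Lattice M] [BoundedOrder M] [IsModularLattice M] {d : ℕ}
    (hd : HasDim M d) : ∃ h : M → ℕ, StrictMono h ∧ ∀ x, h x ≤ d + 1 := by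
  classical
  obtain ⟨s, hs, hcard⟩ := hd
  have hfin : s.Finite := Set.finite_of_ncard_ne_zero (by omega)
  have htot : ∀ a ∈ s, ∀ b ∈ s, a ≤ b ∨ b ≤ a := fun a ha b hb => hs.1.total ha hb
  have hmem : ∀ m, (∀ e ∈ s, e ≤ m ∨ m ≤ e) → m ∈ s := by
    intro m hm
    have hch : IsChain (· ≤ ·) (insert m s) :=
      hs.1.insert (fun b hb _ => (hm b hb).symm)
    rw [hs.2 hch (Set.subset_insert _ _)]
    exact Set.mem_insert _ _
  let H : M → Set M := fun x => {c | c ∈ s ∧ ∃ b ∈ s, b < c ∧ c ≤ (x ⊓ c) ⊔ b}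
  have hHs : ∀ x, H x ⊆ s := fun x c hc => hc.1
  have hHmono : ∀ x y, x ≤ y → H x ⊆ H y := by
    rintro x y hxy c ⟨hc, b, hb, hbc, h⟩
    exact ⟨hc, b, hb, hbc, h.trans (sup_le_sup_right (inf_le_inf_right _ hxy) _)⟩
  refine ⟨fun x => (H x).ncard, ?_, ?_⟩
  · intro x y hxy
    apply Set.ncard_lt_ncard _ (hfin.subset (hHs y))
    refine ⟨hHmono _ _ hxy.le, fun hsub => hxy.not_ge ?_⟩
    have key : ∀ c ∈ s, y ⊓ c ≤ x ⊓ c := by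
      intro c hc
      refine hfin.wellFoundedOn (r := (· < ·)) |>.induction hc
        (P := fun c => y ⊓ c ≤ x ⊓ c) ?_
      intro c hc ih
      by_cases hne : ∃ b ∈ s, b < c
      · have hf2 : {b | b ∈ s ∧ b < c}.Finite := hfin.subset (fun b hb => hb.1)
        obtain ⟨p, ⟨hps, hpc⟩, hpmax⟩ := hf2.exists_maximal (by
          obtain ⟨b, hb, hbc⟩ := hne; exact ⟨b, hb, hbc⟩)
        have hp : ∀ b ∈ s, b < c → b ≤ p := by
          intro b hb hbc
          rcases htot b hb p hps with h | h
          · exact h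
          · exact hpmax ⟨hb, hbc⟩ h
        have ihp : y ⊓ p ≤ x ⊓ p := ih p hps hpc
        by_cases hcy : c ∈ H y
        · obtain ⟨_, b, hb, hbc, hcb⟩ := hsub hcy
          have h1 : c ≤ (x ⊓ c) ⊔ p := hcb.trans (sup_le_sup_left (hp b hb hbc) _)
          have h2 : x ⊓ c ≤ y ⊓ c := inf_le_inf_right _ hxy.le
          calc y ⊓ c ≤ ((x ⊓ c) ⊔ p) ⊓ (y ⊓ c) := le_inf (inf_le_right.trans h1) le_rfl
            _ = (x ⊓ c) ⊔ (p ⊓ (y ⊓ c)) := sup_inf_assoc_of_le _ h2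
            _ ≤ x ⊓ c := sup_le le_rfl (by
              refine (le_inf (inf_le_right.trans inf_le_left) inf_le_left).trans
                (ihp.trans (inf_le_inf_left _ hpc.le)))
        · have hm : (y ⊓ c) ⊔ p ∈ s := by
            apply hmem
            intro e he
            by_cases hec : e < c
            · exact Or.inl ((hp e he hec).trans le_sup_right)
            · right
              have : c ≤ e := by
                rcases htot e he c hc with h | h
                · rcases h.eq_or_lt with h | h
                  · exact h.ge
                  · exact absurd h hec
                · exact h
              exact (sup_le inf_le_right hpc.le).trans this
          have hlt : (y ⊓ c) ⊔ p < c := by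
            refine lt_of_le_not_ge (sup_le inf_le_right hpc.le) fun h => hcy ⟨hc, p, hps, hpc, h⟩
          have : y ⊓ c ≤ p := le_sup_left.trans (hp _ hm hlt)
          exact (le_inf inf_le_left this).trans (ihp.trans (inf_le_inf_left _ hpc.le))
      · have hb : (⊥ : M) ∈ s := hmem _ (fun e _ => Or.inr bot_le)
        have : c = ⊥ := by
          by_contra h
          exact hne ⟨⊥, hb, bot_lt_iff_ne_bot.2 h⟩
        rw [this, inf_bot_eq]
        exact bot_le
    have := key ⊤ (hmem _ (fun e _ => Or.inl le_top))
    simpa using this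
  · intro x
    exact (Set.ncard_le_ncard (hHs x) hfin).trans hcard.le

/-- Iterated expansion. -/
def F {M : Type u} [Ortholattice M] : ℕ → (ℕ → M) → M → M
  | 0, _, a => a
  | k + 1, z, a => F k (fun i => z (i + 1)) (a ⊔ ((a ⊔ z 0) ⊓ (z 0)′))

/-- Term version of `F`. -/
def fT : ℕ → (ℕ → OLTerm) → OLTerm → OLTerm
  | 0, _, a => a
  | k + 1, z, a => fT k (fun i => z (i + 1))
      (.sup a (.inf (.sup a (z 0)) (.compl (z 0))))

/-- Meet of a list of terms. -/
def bigInf : List OLTerm → OLTerm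
  | [] => .one
  | a :: l => .inf a (bigInf l)

section terms
variable {M : Type u} [Ortholattice M]

theorem eval_fT (v : ℕ → M) (k : ℕ) : ∀ (z : ℕ → OLTerm) (a : OLTerm),
    (fT k z a).eval v = F k (fun i => (z i).eval v) (a.eval v) := by
  induction k with
  | zero => intro z a; rfl
  | succ k ih => intro z a; simp only [fT, F, ih, OLTerm.eval]

theorem F_bot (k : ℕ) : ∀ z : ℕ → M, F k z ⊥ = ⊥ := by
  induction k with
  | zero => intro z; rfl
  | succ k ih => intro z; simp only [F, bot_sup_eq, inf_compl, ih]

theorem F_top (k : ℕ) : ∀ z : ℕ → M, F k z ⊤ = ⊤ := by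
  induction k with
  | zero => intro z; rfl
  | succ k ih => intro z; simp only [F, top_sup_eq, ih]

theorem F_attain [IsModularLattice M] (hM : DirectlyIrreducible M) {N : ℕ} (h : M → ℕ)
    (hmono : StrictMono h) (hN : ∀ x, h x ≤ N) (k : ℕ) :
    ∀ a : M, a ≠ ⊥ → N < h a + k → ∃ z : ℕ → M, F k z a = ⊤ := by
  induction k with
  | zero => intro a _ hlt; have := hN a; omega
  | succ k ih =>
    intro a ha hlt
    by_cases hat : a = ⊤
    · exact ⟨fun _ => ⊥, by rw [hat, F_top]⟩
    · obtain ⟨w, hw⟩ := exists_step hM ha hat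
      have hl : a < a ⊔ ((a ⊔ w) ⊓ w′) := by
        refine lt_of_le_not_ge le_sup_left fun h => hw (le_sup_right.trans h)
      have hl2 := hmono hl
      obtain ⟨z, hz⟩ := ih _ (bot_le.trans_lt hl).ne' (by omega)
      refine ⟨fun i => Nat.casesOn i w z, ?_⟩
      exact hz

theorem eval_bigInf_top (v : ℕ → M) (l : List OLTerm) (h : ∀ t ∈ l, t.eval v = ⊤) :
    (bigInf l).eval v = ⊤ := by
  induction l with
  | nil => rfl
  | cons a l ih =>
    simp only [bigInf, OLTerm.eval]
    rw [h a (by simp), ih (fun t ht => h t (by simp [ht])), inf_top_eq]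

theorem eval_bigInf_le (v : ℕ → M) (l : List OLTerm) : ∀ t ∈ l, (bigInf l).eval v ≤ t.eval v := by
  induction l with
  | nil => intro t ht; simp at ht
  | cons a l ih =>
    intro t ht
    simp only [bigInf, OLTerm.eval]
    rcases List.mem_cons.1 ht with h | h
    · rw [h]; exact inf_le_left
    · exact inf_le_right.trans (ih t h)

end terms

/-- Term measuring the difference of `x_i` and `x_j`. -/
def pT (K i j : ℕ) : OLTerm :=
  fT K (fun k => .var (2 * Nat.pair (Nat.pair i j) k + 1))
    (.inf (.sup (.var (2 * i)) (.var (2 * j))) (.compl (.inf (.var (2 * i)) (.var (2 * j)))))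

/-- The list of pairs `i < j < n`. -/
def pairs (n : ℕ) : List (ℕ × ℕ) :=
  (List.range n ×ˢ List.range n).filter (fun p => p.1 < p.2)

theorem mem_pairs {n i j : ℕ} : (i, j) ∈ pairs n ↔ i < j ∧ j < n := by
  simp only [pairs, List.mem_filter, List.mem_product, List.mem_range, decide_eq_true_eq]
  omega

/-- The main term. -/
def mainT (d n : ℕ) : OLTerm :=
  .compl (bigInf ((pairs n).map (fun p => pT (d + 2) p.1 p.2)))

theorem mainT_top {M : Type u} [Ortholattice M] (d n : ℕ) (hn : 1 ≤ n) (T : Set M)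
    (hT : T.Finite) (hcard : T.ncard < n) (v : ℕ → M) (hv : ∀ i, v i ∈ T) :
    (mainT d n).eval v = ⊤ := by
  classical
  obtain ⟨i, hi, j, hj, hij, hx⟩ : ∃ i < n, ∃ j < n, i < j ∧ v (2 * i) = v (2 * j) := by
    have hc : hT.toFinset.card < (Finset.range n).card := by
      rw [Finset.card_range, ← Set.ncard_eq_toFinset_card T hT]; exact hcard
    obtain ⟨i, hi, j, hj, hne, he⟩ := Finset.exists_ne_map_eq_of_card_lt_of_maps_to hc
      (f := fun i => v (2 * i)) (fun i _ => by simpa using hv (2 * i))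
    rw [Finset.mem_range] at hi hj
    rcases lt_or_gt_of_ne hne with h | h
    · exact ⟨i, hi, j, hj, h, he⟩
    · exact ⟨j, hj, i, hi, h, he.symm⟩
  have hle := eval_bigInf_le v ((pairs n).map (fun p => pT (d + 2) p.1 p.2)) (pT (d + 2) i j)
    (List.mem_map.2 ⟨(i, j), mem_pairs.2 ⟨hij, hj⟩, rfl⟩)
  have h0 : (pT (d + 2) i j).eval v = ⊥ := by
    simp only [pT, eval_fT, OLTerm.eval, hx, sup_idem, inf_idem, inf_compl, F_bot]
  rw [h0, le_bot_iff] at hle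
  simp only [mainT, OLTerm.eval]
  rw [hle, compl_bot]

theorem diff_ne_bot {M : Type u} [Ortholattice M] [IsModularLattice M] {x y : M} (h : x ≠ y) :
    (x ⊔ y) ⊓ (x ⊓ y)′ ≠ ⊥ := by
  intro h0
  apply h
  have h1 : x ⊔ y ≤ x ⊓ y := by
    have e : (x ⊓ y) ⊔ ((x ⊓ y)′ ⊓ (x ⊔ y)) = x ⊔ y := by
      rw [← sup_inf_assoc_of_le _ (inf_le_left.trans le_sup_left : x ⊓ y ≤ x ⊔ y), sup_compl,
        top_inf_eq]
    rw [inf_comm] at h0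
    rw [h0, sup_bot_eq] at e
    exact e.ge
  exact le_antisymm (le_sup_left.trans (h1.trans inf_le_right))
    (le_sup_right.trans (h1.trans inf_le_left))

theorem mainT_ne_top {M : Type u} [Ortholattice M] [IsModularLattice M] (d n : ℕ)
    (hM : DirectlyIrreducible M) (hd : HasDim M d) [Infinite M] :
    ∃ v : ℕ → M, (mainT d n).eval v ≠ ⊤ := by
  classical
  obtain ⟨h, hmono, hN⟩ := exists_rank hd
  let x : ℕ ↪ M := Infinite.natEmbedding M
  have hz : ∀ i j : ℕ, ∃ z : ℕ → M, i ≠ j →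
      F (d + 2) z ((x i ⊔ x j) ⊓ (x i ⊓ x j)′) = ⊤ := by
    intro i j
    by_cases hij : i = j
    · exact ⟨fun _ => ⊥, fun h => absurd hij h⟩
    · obtain ⟨z, hz⟩ := F_attain hM h hmono hN (d + 2) _
        (diff_ne_bot (x.injective.ne hij)) (by omega)
      exact ⟨z, fun _ => hz⟩
  choose z hz using hz
  let v : ℕ → M := fun m => if m % 2 = 0 then x (m / 2) else
    z (Nat.unpair (Nat.unpair (m / 2)).1).1 (Nat.unpair (Nat.unpair (m / 2)).1).2
      (Nat.unpair (m / 2)).2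
  have hv0 : ∀ i, v (2 * i) = x i := by
    intro i
    simp [v]
  have hv1 : ∀ i j k, v (2 * Nat.pair (Nat.pair i j) k + 1) = z i j k := by
    intro i j k
    have e1 : (2 * Nat.pair (Nat.pair i j) k + 1) % 2 = 1 := by omega
    have e2 : (2 * Nat.pair (Nat.pair i j) k + 1) / 2 = Nat.pair (Nat.pair i j) k := by omega
    simp only [v, e1, e2, Nat.unpair_pair]
    simp
  refine ⟨v, ?_⟩
  have htop : (bigInf ((pairs n).map (fun p => pT (d + 2) p.1 p.2))).eval v = ⊤ := by
    apply eval_bigInf_top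
    intro t ht
    obtain ⟨⟨i, j⟩, hp, rfl⟩ := List.mem_map.1 ht
    have hij := (mem_pairs.1 hp).1
    simp only [pT, eval_fT, OLTerm.eval, hv0, hv1]
    exact hz i j hij.ne
  simp only [mainT, OLTerm.eval]
  rw [htop, compl_top]
  haveI := hM.1
  exact bot_ne_top

end OLAux

/-- For all `d ≥ 2` and `n ≥ 1` there is an ortholattice term `t` such that for every
directly irreducible modular ortholattice `M` of dimension `d`: (i) `t` evaluates to `⊤`
under every substitution whose entries lie in a subset `T` of `M` with `|T| < n`; and
(ii) if `M` is infinite there is a substitution under which `t` does not evaluate to `⊤`.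
Consequently, no infinite directly irreducible modular ortholattice of finite dimension
`d ≥ 2` admits a finite universal test set. -/
theorem stmt11 (d n : ℕ) (hd : 2 ≤ d) (hn : 1 ≤ n) :
    (∃ t : OLTerm, ∀ (M : Type u) [Ortholattice M] [IsModularLattice M],
      DirectlyIrreducible M → HasDim M d →
        ((∀ T : Set M, T.Finite → T.ncard < n →
            ∀ v : ℕ → M, (∀ i, v i ∈ T) → t.eval v = ⊤) ∧
          (Infinite M → ∃ v : ℕ → M, t.eval v ≠ ⊤))) ∧
    (∀ (M : Type u) [Ortholattice M] [IsModularLattice M],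
      DirectlyIrreducible M → HasDim M d → Infinite M →
        ¬ ∃ T : Set M, T.Finite ∧ IsUniversalTestSet M T) := by
  refine ⟨⟨OLAux.mainT d n, fun M _ _ hM hdim => ⟨fun T hT hc v hv =>
    OLAux.mainT_top d n hn T hT hc v hv, fun _ => OLAux.mainT_ne_top d n hM hdim⟩⟩, ?_⟩
  rintro M _ _ hM hdim hinf ⟨T, hT, hU⟩
  obtain ⟨v, hv⟩ := OLAux.mainT_ne_top d (T.ncard + 1) hM hdim
  exact hv (hU _ (fun w hw => OLAux.mainT_top d (T.ncard + 1) (by omega) T hT (by omega) w hw) v)
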